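/- arXiv:2409.19160 — 2 statements merged into one kernel-verified Lean document; each statement's English description precedes it below -/
import Mathlib

section
/- Let ν ∈ ℝ with ν ≠ 3 and ν ≠ −1, and set α₁ = 2 − ν, α₂ = (ν−1)(7+ν)/(3−ν), α₃ = (1−ν)(3+ν)/(1+ν). For every t ∈ ℝ, the function s ↦ [ G^B_{n_x n_x n_y n_y n_y} + ν G^B_{τ_x τ_x n_y n_y n_y} + α₁ G^B_{n_x n_x n_y τ_y τ_y} + ν α₁ G^B_{τ_x τ_x n_y τ_y τ_y} + α₂ κ(t+s) G^B_{n_x n_x n_y n_y} + ν α₂ κ(t+s) G^B_{τ_x τ_x n_y n_y} + α₃ κ′(t+s) G^B_{n_x n_x τ_y} + ν α₃ κ′(t+s) G^B_{τ_x τ_x τ_y} ](γ(t), γ(t+s)), defined for small s ≠ 0, has a finite limit as s → 0; that is, the singularities of the individual terms (which blow up like 1/s² and 1/s) cancel in this combination. -/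
open Real Filter Topology MeasureTheory

noncomputable section

/-- Euclidean dot product on `ℝ × ℝ`. -/
def dot2 (v w : ℝ × ℝ) : ℝ := v.1 * w.1 + v.2 * w.2

/-- Unit tangent vector `τ(s) = γ′(s)`. -/
def tang (γ : ℝ → ℝ × ℝ) (s : ℝ) : ℝ × ℝ := deriv γ s

/-- Unit normal vector `n(s) = (τ₂(s), −τ₁(s))`. -/
def nor (γ : ℝ → ℝ × ℝ) (s : ℝ) : ℝ × ℝ := ((deriv γ s).2, -(deriv γ s).1)

/-- Signed curvature `κ(s) = −γ″(s)·n(s)`. -/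
def curv (γ : ℝ → ℝ × ℝ) (s : ℝ) : ℝ := -(dot2 (deriv (deriv γ) s) (nor γ s))

/-- The biharmonic Green's function `G^B(x,y) = (1/(8π))‖x−y‖² log‖x−y‖`. -/
def GB (x y : ℝ × ℝ) : ℝ :=
  1 / (8 * π) * dot2 (x - y) (x - y) * Real.log (Real.sqrt (dot2 (x - y) (x - y)))

/-- Directional derivative in the first argument, in the direction `v`. -/
def ddx (v : ℝ × ℝ) (f : ℝ × ℝ → ℝ × ℝ → ℝ) (x y : ℝ × ℝ) : ℝ :=
  deriv (fun e : ℝ => f (x + e • v) y) 0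

/-- Directional derivative in the second argument, in the direction `v`. -/
def ddy (v : ℝ × ℝ) (f : ℝ × ℝ → ℝ × ℝ → ℝ) (x y : ℝ × ℝ) : ℝ :=
  deriv (fun e : ℝ => f x (y + e • v)) 0

/-- The supported-plate kernel
`K = G^B_{n_x n_x n_y n_y n_y} + ν G^B_{τ_x τ_x n_y n_y n_y} + α₁ G^B_{n_x n_x n_y τ_y τ_y}
 + ν α₁ G^B_{τ_x τ_x n_y τ_y τ_y} + α₂ κ(s) G^B_{n_x n_x n_y n_y} + ν α₂ κ(s) G^B_{τ_x τ_x n_y n_y}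
 + α₃ κ′(s) G^B_{n_x n_x τ_y} + ν α₃ κ′(s) G^B_{τ_x τ_x τ_y}`
evaluated at `(x, γ(s))`, with `x`-derivatives in the directions `n(t)`, `τ(t)` and
`y`-derivatives in the directions `n(s)`, `τ(s)`. -/
def suppKer (γ : ℝ → ℝ × ℝ) (ν α₁ α₂ α₃ : ℝ) (t : ℝ) (x : ℝ × ℝ) (s : ℝ) : ℝ :=
  ddx (nor γ t) (ddx (nor γ t) (ddy (nor γ s) (ddy (nor γ s) (ddy (nor γ s) GB)))) x (γ s)
    + ν * ddx (tang γ t) (ddx (tang γ t)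
        (ddy (nor γ s) (ddy (nor γ s) (ddy (nor γ s) GB)))) x (γ s)
    + α₁ * ddx (nor γ t) (ddx (nor γ t)
        (ddy (nor γ s) (ddy (tang γ s) (ddy (tang γ s) GB)))) x (γ s)
    + ν * α₁ * ddx (tang γ t) (ddx (tang γ t)
        (ddy (nor γ s) (ddy (tang γ s) (ddy (tang γ s) GB)))) x (γ s)
    + α₂ * curv γ s * ddx (nor γ t) (ddx (nor γ t)
        (ddy (nor γ s) (ddy (nor γ s) GB))) x (γ s)
    + ν * α₂ * curv γ s * ddx (tang γ t) (ddx (tang γ t)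
        (ddy (nor γ s) (ddy (nor γ s) GB))) x (γ s)
    + α₃ * deriv (curv γ) s * ddx (nor γ t) (ddx (nor γ t) (ddy (tang γ s) GB)) x (γ s)
    + ν * α₃ * deriv (curv γ) s * ddx (tang γ t) (ddx (tang γ t) (ddy (tang γ s) GB)) x (γ s)

/-! Read `x - y` as a complex number `z`. Up to the factor `(8π)⁻¹`, every derivative of `G^B` of
order at least three is a function `Re (A z̄ z⁻¹ ^ (n + 1) + B z⁻¹ ^ n)`. In the frame moving with
the curve at `t`, the kernel times `8π s³` is therefore an explicit expression in the tangent `e` at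
`t + s`, the difference quotient `q` of the curve between `t` and `t + s`, and the curvature. To the
order that matters these are pure phases, `e ≈ exp (i (κ s + κ' s² / 2))` and
`q ≈ exp (i (κ s / 2 + κ' s² / 6))`, so products of their powers are expanded by adding phases.
The constant term vanishes because it is an imaginary part, and the coefficients of `s` and `s²` are
`κ ((1 - ν) (14 + 2 ν) + 2 (3 - ν) α₂)` and `κ' (8 (1 - ν) + 2 (3 - ν) α₂ + 2 (1 + ν) α₃)`. The
choice of `α₂` and `α₃` is what makes both of them zero. -/

open scoped ComplexConjugate

/-- The identification of the plane `ℝ × ℝ` with `ℂ`. -/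
def toComplex : (ℝ × ℝ) ≃L[ℝ] ℂ := Complex.equivRealProdCLM.symm

@[simp] lemma toComplex_re (p : ℝ × ℝ) : (toComplex p).re = p.1 := by simp [toComplex]

@[simp] lemma toComplex_im (p : ℝ × ℝ) : (toComplex p).im = p.2 := by simp [toComplex]

lemma dot2_self (v : ℝ × ℝ) : dot2 v v = ‖toComplex v‖ ^ 2 := by
  rw [Complex.sq_norm, Complex.normSq_apply, toComplex_re, toComplex_im, dot2]

/-- `f(x, y) = (8π)⁻¹ Φ(x - y)` off the diagonal, with `x - y` read as a complex number. The
factor `(8π)⁻¹` of the Green's function is split off because all its derivatives carry it. -/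
def HasProfile (f : ℝ × ℝ → ℝ × ℝ → ℝ) (Φ : ℂ → ℝ) : Prop :=
  ∀ ⦃x y⦄, x ≠ y → f x y = 1 / (8 * π) * Φ (toComplex (x - y))

namespace HasProfile

variable {f : ℝ × ℝ → ℝ × ℝ → ℝ} {Φ Φ' : ℂ → ℝ} {v : ℝ × ℝ}

lemma ddx (hf : HasProfile f Φ)
    (hΦ : ∀ z, z ≠ 0 → HasLineDerivAt ℝ Φ (Φ' z) z (toComplex v)) :
    HasProfile (ddx v f) Φ' := by
  intro x y hxy
  have hne : ∀ᶠ e : ℝ in 𝓝 0, x + e • v ≠ y :=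
    ContinuousAt.eventually_ne (by fun_prop) (by simpa using hxy)
  have hev : (fun e : ℝ => f (x + e • v) y) =ᶠ[𝓝 0]
      fun e => 1 / (8 * π) * Φ (toComplex (x - y) + e • toComplex v) := by
    filter_upwards [hne] with e he
    rw [hf he, add_sub_right_comm, map_add, map_smul]
  have hz : toComplex (x - y) ≠ 0 := by simpa [sub_eq_zero] using hxy
  exact hev.deriv_eq.trans ((hΦ _ hz).const_mul _).deriv

lemma ddy (hf : HasProfile f Φ)
    (hΦ : ∀ z, z ≠ 0 → HasLineDerivAt ℝ Φ (Φ' z) z (-toComplex v)) :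
    HasProfile (ddy v f) Φ' := by
  intro x y hxy
  have hne : ∀ᶠ e : ℝ in 𝓝 0, x ≠ y + e • v := by
    simp only [ne_comm (a := x)]
    exact ContinuousAt.eventually_ne (by fun_prop) (by simpa using hxy.symm)
  have hev : (fun e : ℝ => f x (y + e • v)) =ᶠ[𝓝 0]
      fun e => 1 / (8 * π) * Φ (toComplex (x - y) + e • -toComplex v) := by
    filter_upwards [hne] with e he
    rw [hf he, ← sub_sub, map_sub toComplex (x - y), map_smul, smul_neg, sub_eq_add_neg]
  have hz : toComplex (x - y) ≠ 0 := by simpa [sub_eq_zero] using hxy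
  exact hev.deriv_eq.trans ((hΦ _ hz).const_mul _).deriv

end HasProfile

section LineDerivatives

variable {z : ℂ}

lemma hasLineDerivAt_id (z a : ℂ) : HasLineDerivAt ℝ (fun w : ℂ => w) a z a := by
  simpa [HasLineDerivAt] using ((hasDerivAt_id (0 : ℝ)).smul_const a).const_add z

lemma hasLineDerivAt_conj (z a : ℂ) :
    HasLineDerivAt ℝ (fun w : ℂ => conj w) (conj a) z a :=
  (hasLineDerivAt_id z a).star

lemma hasLineDerivAt_inv_pow (hz : z ≠ 0) (n : ℕ) (a : ℂ) :
    HasLineDerivAt ℝ (fun w : ℂ => w⁻¹ ^ n) (-n * a * z⁻¹ ^ (n + 1)) z a := by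
  have h := (HasDerivAt.inv (hasLineDerivAt_id z a) (by simpa using hz)).pow n
  refine h.congr_deriv ?_
  cases n with
  | zero => simp
  | succ n =>
    simp only [Pi.inv_apply, zero_smul, add_zero, Nat.add_sub_cancel, div_eq_mul_inv, ← inv_pow]
    ring

lemma hasDerivAt_re {F : ℝ → ℂ} {F' : ℂ} {x : ℝ} (hF : HasDerivAt F F' x) :
    HasDerivAt (fun t => (F t).re) F'.re x :=
  Complex.reCLM.hasFDerivAt.comp_hasDerivAt x hF

lemma hasLineDerivAt_log_norm (hz : z ≠ 0) (a : ℂ) :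
    HasLineDerivAt ℝ (fun w : ℂ => Real.log ‖w‖) (a * z⁻¹).re z a := by
  have h := ((HasDerivAt.norm_sq (hasLineDerivAt_id z a)).log (by simpa using hz)).div_const 2
  have hlog : (fun w : ℂ => Real.log ‖w‖) = fun w => Real.log (‖w‖ ^ 2) / 2 := by
    funext w; rw [Real.log_pow]; push_cast; ring
  rw [hlog]
  refine h.congr_deriv ?_
  have hinv : (a * z⁻¹).re = (conj z * a).re * (Complex.normSq z)⁻¹ := by
    rw [Complex.inv_def, ← mul_assoc, Complex.re_mul_ofReal, mul_comm a]
  simp only [zero_smul, add_zero]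
  rw [hinv, Complex.inner, Complex.sq_norm]
  ring_nf

end LineDerivatives

/-- Beyond second order, the derivatives of the biharmonic Green's function have profiles of this
form. By Goursat's representation every biharmonic function is locally `Re (z̄ f(z) + g(z))` with
`f`, `g` holomorphic; this is the case where `f`, `g` are negative powers. -/
def goursat (n : ℕ) (A B z : ℂ) : ℝ := (A * conj z * z⁻¹ ^ (n + 1) + B * z⁻¹ ^ n).re

lemma hasLineDerivAt_goursat {z : ℂ} (hz : z ≠ 0) (n : ℕ) (A B a : ℂ) :
    HasLineDerivAt ℝ (goursat n A B)
      (goursat (n + 1) (-(n + 1) * a * A) (conj a * A - n * a * B) z) z a := by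
  have h := hasDerivAt_re <|
    (((hasLineDerivAt_conj z a).const_mul A).mul (hasLineDerivAt_inv_pow hz (n + 1) a)).add
      ((hasLineDerivAt_inv_pow hz n a).const_mul B)
  refine h.congr_deriv ?_
  simp only [goursat, zero_smul, add_zero]
  push_cast
  ring_nf

lemma goursat_add_const_mul (n : ℕ) (A B A' B' z : ℂ) (c : ℝ) :
    goursat n A B z + c * goursat n A' B' z = goursat n (A + c * A') (B + c * B') z := by
  simp only [goursat]
  rw [← Complex.re_ofReal_mul, ← Complex.add_re]
  ring_nf

lemma goursat_mul_of_norm_eq_one {T : ℂ} (hT : ‖T‖ = 1) {r : ℝ} (hr : r ≠ 0) (n : ℕ)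
    (A B z : ℂ) :
    goursat n (A * T ^ (n + 2)) (B * T ^ n) (r * T * z) = r⁻¹ ^ n * goursat n A B z := by
  have hr' : (r : ℂ) * (r : ℂ)⁻¹ = 1 := mul_inv_cancel₀ (by exact_mod_cast hr)
  have hT' (k : ℕ) : T ^ k * T⁻¹ ^ k = 1 := by
    rw [← mul_pow, mul_inv_cancel₀ (ne_zero_of_norm_ne_zero (by simp [hT])), one_pow]
  simp only [goursat]
  rw [← Complex.re_ofReal_mul]
  congr 1
  simp only [map_mul, Complex.conj_ofReal, ← Complex.inv_eq_conj hT, mul_inv, Complex.ofReal_pow,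
    Complex.ofReal_inv, mul_pow]
  linear_combination
    A * conj z * z⁻¹ ^ (n + 1) * (r : ℂ)⁻¹ ^ n * (r * (r : ℂ)⁻¹ * hT' (n + 2) + hr')
      + B * z⁻¹ ^ n * (r : ℂ)⁻¹ ^ n * hT' n

lemma hasProfile_GB : HasProfile GB fun z => ‖z‖ ^ 2 * Real.log ‖z‖ := by
  intro x y _
  rw [GB, dot2_self, Real.sqrt_sq (norm_nonneg _)]
  ring

lemma two_mul_re_mul_re (u v : ℂ) : 2 * u.re * v.re = (u * v).re + (u * conj v).re := by
  simp only [Complex.mul_re, Complex.conj_re, Complex.conj_im]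
  ring

section GreensFunctionDerivatives

variable {z : ℂ}

lemma hasLineDerivAt_normSq_mul_log (hz : z ≠ 0) (a : ℂ) :
    HasLineDerivAt ℝ (fun w : ℂ => ‖w‖ ^ 2 * Real.log ‖w‖)
      ((a * conj z).re * (2 * Real.log ‖z‖ + 1)) z a := by
  have h := (HasDerivAt.norm_sq (hasLineDerivAt_id z a)).mul (hasLineDerivAt_log_norm hz a)
  refine h.congr_deriv ?_
  have hinv : ‖z‖ ^ 2 * (a * z⁻¹).re = (a * conj z).re := by
    rw [← Complex.re_ofReal_mul, Complex.ofReal_pow, ← Complex.mul_conj']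
    field_simp
  simp only [zero_smul, add_zero]
  rw [hinv, Complex.inner, mul_comm a]
  ring

lemma hasLineDerivAt_mul_conj_mul_log (hz : z ≠ 0) (a b : ℂ) :
    HasLineDerivAt ℝ (fun w : ℂ => (a * conj w).re * (2 * Real.log ‖w‖ + 1))
      ((a * b * conj z * z⁻¹).re + 2 * (a * conj b).re * (Real.log ‖z‖ + 1)) z b := by
  have h := (hasDerivAt_re ((hasLineDerivAt_conj z b).const_mul a)).mul
    (((hasLineDerivAt_log_norm hz b).const_mul 2).add_const 1)
  refine h.congr_deriv ?_
  have hre : 2 * (a * conj z).re * (b * z⁻¹).re =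
      (a * b * conj z * z⁻¹).re + (a * conj b).re := by
    rw [two_mul_re_mul_re, map_mul, map_inv₀]
    congr 2
    · ring
    · have hz' : conj z ≠ 0 := by simpa using hz
      field_simp
  simp only [zero_smul, add_zero]
  linear_combination hre

lemma hasLineDerivAt_mul_conj_mul_inv_add_log (hz : z ≠ 0) (a b c : ℂ) :
    HasLineDerivAt ℝ
      (fun w : ℂ => (a * b * conj w * w⁻¹).re + 2 * (a * conj b).re * (Real.log ‖w‖ + 1))
      (goursat 1 (-(a * b * c)) (conj a * b * c + a * conj b * c + a * b * conj c) z) z c := by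
  have h := (hasDerivAt_re (((hasLineDerivAt_conj z c).const_mul (a * b)).mul
      (HasDerivAt.inv (hasLineDerivAt_id z c) (by simpa using hz)))).add
    (((hasLineDerivAt_log_norm hz c).add_const 1).const_mul (2 * (a * conj b).re))
  refine h.congr_deriv ?_
  have hre := two_mul_re_mul_re (c * z⁻¹) (a * conj b)
  simp only [goursat, zero_smul, add_zero, Pi.inv_apply, map_mul, Complex.conj_conj] at hre ⊢
  rw [mul_right_comm 2, hre, ← Complex.add_re, ← Complex.add_re]
  congr 1
  simp only [inv_pow]
  field_simp
  ring

end GreensFunctionDerivatives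

lemma hasProfile_ddy_GB (a : ℝ × ℝ) :
    HasProfile (ddy a GB)
      fun z => (-toComplex a * conj z).re * (2 * Real.log ‖z‖ + 1) :=
  hasProfile_GB.ddy fun _ hz => hasLineDerivAt_normSq_mul_log hz _

lemma hasProfile_ddy_ddy_GB (a b : ℝ × ℝ) :
    HasProfile (ddy b (ddy a GB)) fun z =>
      (-toComplex a * -toComplex b * conj z * z⁻¹).re
        + 2 * (-toComplex a * conj (-toComplex b)).re * (Real.log ‖z‖ + 1) :=
  (hasProfile_ddy_GB a).ddy fun _ hz => hasLineDerivAt_mul_conj_mul_log hz _ _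

/-- The operator `u ↦ u_nn + ν u_ττ` in the first argument; on the boundary of a plate with
Poisson ratio `ν` it gives the bending moment. -/
def bendingMoment (ν : ℝ) (n τ : ℝ × ℝ) (f : ℝ × ℝ → ℝ × ℝ → ℝ) (x y : ℝ × ℝ) : ℝ :=
  ddx n (ddx n f) x y + ν * ddx τ (ddx τ f) x y

lemma suppKer_eq_bendingMoment (γ : ℝ → ℝ × ℝ) (ν α₁ α₂ α₃ t : ℝ) (x : ℝ × ℝ) (s : ℝ) :
    suppKer γ ν α₁ α₂ α₃ t x s =
      bendingMoment ν (nor γ t) (tang γ t)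
          (ddy (nor γ s) (ddy (nor γ s) (ddy (nor γ s) GB))) x (γ s)
        + α₁ * bendingMoment ν (nor γ t) (tang γ t)
          (ddy (nor γ s) (ddy (tang γ s) (ddy (tang γ s) GB))) x (γ s)
        + α₂ * curv γ s * bendingMoment ν (nor γ t) (tang γ t)
          (ddy (nor γ s) (ddy (nor γ s) GB)) x (γ s)
        + α₃ * deriv (curv γ) s * bendingMoment ν (nor γ t) (tang γ t)
          (ddy (tang γ s) GB) x (γ s) := by
  simp only [suppKer, bendingMoment]
  ring

lemma toComplex_nor (γ : ℝ → ℝ × ℝ) (s : ℝ) :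
    toComplex (nor γ s) = -Complex.I * toComplex (tang γ s) := by
  apply Complex.ext <;> simp [nor, tang]

section BendingMoment

variable {f : ℝ × ℝ → ℝ × ℝ → ℝ} {n τ : ℝ × ℝ}

lemma hasProfile_bendingMoment {m : ℕ} {A B A' B' : ℂ} {ν : ℝ}
    (hn : HasProfile (ddx n (ddx n f)) (goursat m A B))
    (hτ : HasProfile (ddx τ (ddx τ f)) (goursat m A' B')) :
    HasProfile (bendingMoment ν n τ f) (goursat m (A + ν * A') (B + ν * B')) := by
  intro x y hxy
  rw [bendingMoment, hn hxy, hτ hxy, ← goursat_add_const_mul]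
  ring

lemma HasProfile.congr_goursat {m : ℕ} {A B A' B' : ℂ} (h : HasProfile f (goursat m A B))
    (hA : A = A') (hB : B = B') : HasProfile f (goursat m A' B') := by
  rwa [← hA, ← hB]

lemma hasProfile_bendingMoment_of_goursat {m : ℕ} {A B : ℂ} (ν : ℝ)
    (hτ : ‖toComplex τ‖ = 1) (hn : toComplex n = -Complex.I * toComplex τ)
    (hf : HasProfile f (goursat m A B)) :
    HasProfile (bendingMoment ν n τ f) (goursat (m + 2)
      (-((1 - ν) * (m + 1) * (m + 2) * toComplex τ ^ 2 * A))
      (-(2 * (1 + ν) * (m + 1) * A + (1 - ν) * m * (m + 1) * toComplex τ ^ 2 * B))) := by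
  have hdd (v : ℝ × ℝ) := (hf.ddx fun z hz => hasLineDerivAt_goursat hz m A B (toComplex v)).ddx
    fun z hz => hasLineDerivAt_goursat hz (m + 1) _ _ (toComplex v)
  have hτ0 : toComplex τ ≠ 0 := by rw [← norm_ne_zero_iff, hτ]; exact one_ne_zero
  refine (hasProfile_bendingMoment (hdd n) (hdd τ)).congr_goursat ?_ ?_ <;>
  · simp only [hn, map_mul, map_neg, Complex.conj_I, ← Complex.inv_eq_conj hτ]
    push_cast
    field_simp
    ring_nf
    simp only [Complex.I_sq]
    ring

end BendingMoment

lemma hasProfile_ddy_ddy_ddy_GB (a b c : ℝ × ℝ) :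
    HasProfile (ddy c (ddy b (ddy a GB))) (goursat 1
      (toComplex a * toComplex b * toComplex c)
      (-(conj (toComplex a) * toComplex b * toComplex c
        + toComplex a * conj (toComplex b) * toComplex c
        + toComplex a * toComplex b * conj (toComplex c)))) :=
  ((hasProfile_ddy_ddy_GB a b).ddy fun _ hz =>
    hasLineDerivAt_mul_conj_mul_inv_add_log hz _ _ _).congr_goursat
    (by ring) (by simp only [map_neg]; ring)

lemma hasProfile_ddx_ddx_ddy_GB (a d : ℝ × ℝ) :
    HasProfile (ddx d (ddx d (ddy a GB))) (goursat 1
      (toComplex a * toComplex d ^ 2)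
      (-(conj (toComplex a) * toComplex d ^ 2 + 2 * ‖toComplex d‖ ^ 2 * toComplex a))) :=
  (((hasProfile_ddy_GB a).ddx fun _ hz => hasLineDerivAt_mul_conj_mul_log hz _ _).ddx
    fun _ hz => hasLineDerivAt_mul_conj_mul_inv_add_log hz _ _ _).congr_goursat
    (by ring) (by simp only [map_neg, ← Complex.mul_conj']; ring)

lemma hasProfile_ddx_ddx_ddy_ddy_GB (a d : ℝ × ℝ) :
    HasProfile (ddx d (ddx d (ddy a (ddy a GB)))) (goursat 2
      (2 * toComplex a ^ 2 * toComplex d ^ 2)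
      (-(2 * ‖toComplex a‖ ^ 2 * toComplex d ^ 2 + 2 * ‖toComplex d‖ ^ 2 * toComplex a ^ 2))) :=
  (((hasProfile_ddy_ddy_GB a a).ddx fun _ hz =>
    hasLineDerivAt_mul_conj_mul_inv_add_log hz _ _ _).ddx
    fun _ hz => hasLineDerivAt_goursat hz _ _ _ _).congr_goursat
    (by push_cast; ring) (by simp only [map_neg, ← Complex.mul_conj']; push_cast; ring)

section SupportedPlate

variable {γ : ℝ → ℝ × ℝ}

lemma hasProfile_bendingMoment_ddy_nor_nor_nor_GB (hγ : ∀ s, ‖toComplex (tang γ s)‖ = 1)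
    (ν t s : ℝ) :
    HasProfile (bendingMoment ν (nor γ t) (tang γ t)
        (ddy (nor γ s) (ddy (nor γ s) (ddy (nor γ s) GB))))
      (goursat 3
        (-(6 * (1 - ν) * Complex.I * toComplex (tang γ t) ^ 2 * toComplex (tang γ s) ^ 3))
        (-(4 * (1 + ν) * Complex.I * toComplex (tang γ s) ^ 3
          + 6 * (1 - ν) * Complex.I * toComplex (tang γ t) ^ 2 * toComplex (tang γ s)))) := by
  have hs : toComplex (tang γ s) ≠ 0 := ne_zero_of_norm_ne_zero (by simp [hγ s])
  refine (hasProfile_bendingMoment_of_goursat ν (hγ t) (toComplex_nor γ t)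
    (hasProfile_ddy_ddy_ddy_GB _ _ _)).congr_goursat ?_ ?_ <;>
  · simp only [toComplex_nor, map_mul, map_neg, Complex.conj_I, ← Complex.inv_eq_conj (hγ s)]
    push_cast
    field_simp
    ring_nf
    simp only [Complex.I_sq]
    ring

lemma hasProfile_bendingMoment_ddy_nor_tang_tang_GB (hγ : ∀ s, ‖toComplex (tang γ s)‖ = 1)
    (ν t s : ℝ) :
    HasProfile (bendingMoment ν (nor γ t) (tang γ t)
        (ddy (nor γ s) (ddy (tang γ s) (ddy (tang γ s) GB))))
      (goursat 3
        (6 * (1 - ν) * Complex.I * toComplex (tang γ t) ^ 2 * toComplex (tang γ s) ^ 3)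
        (4 * (1 + ν) * Complex.I * toComplex (tang γ s) ^ 3
          - 2 * (1 - ν) * Complex.I * toComplex (tang γ t) ^ 2 * toComplex (tang γ s))) := by
  have hs : toComplex (tang γ s) ≠ 0 := ne_zero_of_norm_ne_zero (by simp [hγ s])
  refine (hasProfile_bendingMoment_of_goursat ν (hγ t) (toComplex_nor γ t)
    (hasProfile_ddy_ddy_ddy_GB _ _ _)).congr_goursat ?_ ?_ <;>
  · simp only [toComplex_nor, map_mul, map_neg, Complex.conj_I, ← Complex.inv_eq_conj (hγ s)]
    push_cast
    field_simp
    ring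

lemma hasProfile_bendingMoment_ddy_nor_nor_GB (hγ : ∀ s, ‖toComplex (tang γ s)‖ = 1)
    (ν t s : ℝ) :
    HasProfile (bendingMoment ν (nor γ t) (tang γ t) (ddy (nor γ s) (ddy (nor γ s) GB)))
      (goursat 2
        (2 * (1 - ν) * toComplex (tang γ t) ^ 2 * toComplex (tang γ s) ^ 2)
        (2 * (1 + ν) * toComplex (tang γ s) ^ 2
          + 2 * (1 - ν) * toComplex (tang γ t) ^ 2)) := by
  refine (hasProfile_bendingMoment (hasProfile_ddx_ddx_ddy_ddy_GB _ _)
    (hasProfile_ddx_ddx_ddy_ddy_GB _ _)).congr_goursat ?_ ?_ <;>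
  · simp only [toComplex_nor, norm_mul, norm_neg, Complex.norm_I, hγ]
    push_cast
    ring_nf
    simp only [Complex.I_sq, Complex.I_pow_four]
    ring

lemma hasProfile_bendingMoment_ddy_tang_GB (hγ : ∀ s, ‖toComplex (tang γ s)‖ = 1)
    (ν t s : ℝ) :
    HasProfile (bendingMoment ν (nor γ t) (tang γ t) (ddy (tang γ s) GB))
      (goursat 1
        (-((1 - ν) * toComplex (tang γ t) ^ 2 * toComplex (tang γ s)))
        ((1 - ν) * toComplex (tang γ t) ^ 2 * conj (toComplex (tang γ s))
          - 2 * (1 + ν) * toComplex (tang γ s))) := by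
  refine (hasProfile_bendingMoment (hasProfile_ddx_ddx_ddy_GB _ _)
    (hasProfile_ddx_ddx_ddy_GB _ _)).congr_goursat ?_ ?_ <;>
  · simp only [toComplex_nor, norm_mul, norm_neg, Complex.norm_I, hγ]
    push_cast
    ring_nf
    simp only [Complex.I_sq]
    ring

/-- The tangent at `t + s` in the frame moving with the curve at `t`. -/
def turning (γ : ℝ → ℝ × ℝ) (t s : ℝ) : ℂ :=
  conj (toComplex (tang γ t)) * toComplex (tang γ (t + s))

/-- The difference quotient of the curve between `t` and `t + s`, in the frame moving with the
curve at `t`. -/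
def chord (γ : ℝ → ℝ × ℝ) (t s : ℝ) : ℂ :=
  conj (toComplex (tang γ t)) * (s⁻¹ • toComplex (γ (t + s) - γ t))

/-- The value of `8π s³ K` at `(γ t, γ (t + s))`, where `K` is the supported-plate kernel with
`α₁ = 2 - ν`, as a function of the curvature `κ` and its derivative `κ'` at `t + s`, the turning
`e` and the chord `q`. -/
def reducedKernel (ν α₂ α₃ s κ κ' : ℝ) (e q : ℂ) : ℝ :=
  6 * (1 - ν) ^ 2 * (e ^ 3 * conj q * q⁻¹ ^ 4).im
    + 2 * (1 - ν) * (2 * (1 + ν) * (e ^ 3 * q⁻¹ ^ 3).im - (5 - ν) * (e * q⁻¹ ^ 3).im)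
    + α₂ * (κ * s * (2 * (1 - ν) * ((e ^ 2 * conj q * q⁻¹ ^ 3).re + (q⁻¹ ^ 2).re)
      + 2 * (1 + ν) * (e ^ 2 * q⁻¹ ^ 2).re))
    + α₃ * (κ' * s ^ 2 * ((1 - ν) * ((e * conj q * q⁻¹ ^ 2).re - (conj e * q⁻¹).re)
      + 2 * (1 + ν) * (e * q⁻¹).re))

lemma reducedKernel_eq_goursat (ν α₂ α₃ s κ κ' : ℝ) (e q : ℂ) :
    reducedKernel ν α₂ α₃ s κ κ' e q =
      -(goursat 3 (-(6 * (1 - ν) * Complex.I * e ^ 3))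
          (-(4 * (1 + ν) * Complex.I * e ^ 3 + 6 * (1 - ν) * Complex.I * e)) q
        + (2 - ν) * goursat 3 (6 * (1 - ν) * Complex.I * e ^ 3)
          (4 * (1 + ν) * Complex.I * e ^ 3 - 2 * (1 - ν) * Complex.I * e) q)
      + α₂ * κ * s * goursat 2 (2 * (1 - ν) * e ^ 2) (2 * (1 + ν) * e ^ 2 + 2 * (1 - ν)) q
      - α₃ * κ' * s ^ 2 *
        goursat 1 (-((1 - ν) * e)) ((1 - ν) * conj e - 2 * (1 + ν) * e) q := by
  simp only [reducedKernel, goursat, Nat.reduceAdd, pow_one, mul_assoc _ (conj q),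
    mul_assoc _ _ (_ ^ _)]
  simp only [Complex.add_re, Complex.sub_re, Complex.neg_re, Complex.mul_re, Complex.add_im,
    Complex.sub_im, Complex.neg_im, Complex.mul_im, Complex.one_re, Complex.one_im,
    Complex.I_re, Complex.I_im, Complex.ofReal_re, Complex.ofReal_im, Complex.re_ofNat,
    Complex.im_ofNat]
  ring

lemma toComplex_tang_mul_conj (hγ : ∀ s, ‖toComplex (tang γ s)‖ = 1) (t : ℝ) :
    toComplex (tang γ t) * conj (toComplex (tang γ t)) = 1 := by
  rw [Complex.mul_conj', hγ]
  norm_num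

lemma toComplex_tang_eq_turning_mul (hγ : ∀ s, ‖toComplex (tang γ s)‖ = 1) (t s : ℝ) :
    toComplex (tang γ (t + s)) = turning γ t s * toComplex (tang γ t) := by
  rw [turning]
  linear_combination -toComplex (tang γ (t + s)) * toComplex_tang_mul_conj hγ t

lemma toComplex_sub_eq_mul_chord (hγ : ∀ s, ‖toComplex (tang γ s)‖ = 1) (t : ℝ) {s : ℝ}
    (hs : s ≠ 0) :
    toComplex (γ t - γ (t + s)) = (-s : ℝ) * toComplex (tang γ t) * chord γ t s := by
  have hq : (s : ℂ) * (s⁻¹ • toComplex (γ (t + s) - γ t)) = toComplex (γ (t + s) - γ t) := by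
    rw [← Complex.real_smul, smul_inv_smul₀ hs]
  rw [← neg_sub, map_neg, chord]
  push_cast
  linear_combination toComplex_tang_mul_conj hγ t * toComplex (γ (t + s) - γ t)
    + toComplex (tang γ t) * conj (toComplex (tang γ t)) * hq

lemma suppKer_eq_reducedKernel (hγ : ∀ s, ‖toComplex (tang γ s)‖ = 1) (ν α₂ α₃ t : ℝ) {s : ℝ}
    (hs : s ≠ 0) (hne : γ t ≠ γ (t + s)) :
    suppKer γ ν (2 - ν) α₂ α₃ t (γ t) (t + s) =
      1 / (8 * π) * ((s ^ 3)⁻¹ * reducedKernel ν α₂ α₃ s (curv γ (t + s))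
        (deriv (curv γ) (t + s)) (turning γ t s) (chord γ t s)) := by
  have hg (n : ℕ) {A' B' : ℂ} (A B : ℂ) (hA : A' = A * toComplex (tang γ t) ^ (n + 2))
      (hB : B' = B * toComplex (tang γ t) ^ n) :
      goursat n A' B' ((-s : ℝ) * toComplex (tang γ t) * chord γ t s) =
        (-s)⁻¹ ^ n * goursat n A B (chord γ t s) := by
    rw [hA, hB, goursat_mul_of_norm_eq_one (hγ t) (neg_ne_zero.mpr hs)]
  rw [suppKer_eq_bendingMoment, hasProfile_bendingMoment_ddy_nor_nor_nor_GB hγ ν t _ hne,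
    hasProfile_bendingMoment_ddy_nor_tang_tang_GB hγ ν t _ hne,
    hasProfile_bendingMoment_ddy_nor_nor_GB hγ ν t _ hne,
    hasProfile_bendingMoment_ddy_tang_GB hγ ν t _ hne, reducedKernel_eq_goursat,
    toComplex_sub_eq_mul_chord hγ t hs, toComplex_tang_eq_turning_mul hγ t s]
  set e := turning γ t s
  rw [hg 3 (-(6 * (1 - ν) * Complex.I * e ^ 3))
      (-(4 * (1 + ν) * Complex.I * e ^ 3 + 6 * (1 - ν) * Complex.I * e)) (by ring) (by ring),
    hg 3 (6 * (1 - ν) * Complex.I * e ^ 3)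
      (4 * (1 + ν) * Complex.I * e ^ 3 - 2 * (1 - ν) * Complex.I * e) (by ring) (by ring),
    hg 2 (2 * (1 - ν) * e ^ 2) (2 * (1 + ν) * e ^ 2 + 2 * (1 - ν)) (by ring) (by ring),
    hg 1 (-((1 - ν) * e)) ((1 - ν) * conj e - 2 * (1 + ν) * e) (by ring)
      (by
        rw [map_mul]
        linear_combination (1 - ν) * toComplex (tang γ t) * conj e * toComplex_tang_mul_conj hγ t)]
  field_simp
  ring

end SupportedPlate

/-! ### Expansions in powers of the arc length -/

section HasLimitDivPow

variable {E : Type*} [NormedAddCommGroup E] [NormedSpace ℝ E]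

/-- `F s / s ^ n` converges as `s → 0`: `F` is `O(s ^ n)`, with a definite leading coefficient. -/
def HasLimitDivPow (n : ℕ) (F : ℝ → E) : Prop :=
  ∃ c, Tendsto (fun s => (s ^ n)⁻¹ • F s) (𝓝[≠] 0) (𝓝 c)

namespace HasLimitDivPow

variable {m n : ℕ} {F G : ℝ → E} {f g : ℝ → ℝ}

lemma congr (hF : HasLimitDivPow n F) (h : ∀ s, s ≠ 0 → F s = G s) : HasLimitDivPow n G := by
  obtain ⟨c, hc⟩ := hF
  refine ⟨c, hc.congr' ?_⟩
  filter_upwards [self_mem_nhdsWithin] with s hs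
  rw [h s hs]

lemma add (hF : HasLimitDivPow n F) (hG : HasLimitDivPow n G) :
    HasLimitDivPow n fun s => F s + G s := by
  obtain ⟨c, hc⟩ := hF
  obtain ⟨d, hd⟩ := hG
  exact ⟨c + d, by simpa only [smul_add] using hc.add hd⟩

lemma clm_apply {E' : Type*} [NormedAddCommGroup E'] [NormedSpace ℝ E'] (L : E →L[ℝ] E')
    (hF : HasLimitDivPow n F) : HasLimitDivPow n fun s => L (F s) := by
  obtain ⟨c, hc⟩ := hF
  exact ⟨L c, ((L.continuous.tendsto c).comp hc).congr fun s => map_smul L _ _⟩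

lemma neg (hF : HasLimitDivPow n F) : HasLimitDivPow n fun s => -F s :=
  hF.clm_apply (-ContinuousLinearMap.id ℝ E)

lemma sub (hF : HasLimitDivPow n F) (hG : HasLimitDivPow n G) :
    HasLimitDivPow n fun s => F s - G s := by
  simpa only [sub_eq_add_neg] using hF.add hG.neg

lemma mono (hF : HasLimitDivPow n F) (hmn : m ≤ n := by norm_num) : HasLimitDivPow m F := by
  obtain ⟨c, hc⟩ := hF
  have hpow : Tendsto (fun s : ℝ => s ^ (n - m)) (𝓝[≠] 0) (𝓝 (0 ^ (n - m))) :=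
    (continuous_pow _).continuousAt.tendsto.mono_left nhdsWithin_le_nhds
  refine ⟨_, (hpow.smul hc).congr' ?_⟩
  filter_upwards [self_mem_nhdsWithin] with s hs
  rw [smul_smul, pow_sub₀ s hs hmn, mul_assoc, mul_comm, mul_assoc, inv_mul_cancel₀, mul_one]
  exact pow_ne_zero _ hs

lemma mul {k : ℕ} (hf : HasLimitDivPow m f) (hg : HasLimitDivPow n g)
    (hk : k ≤ m + n := by norm_num) : HasLimitDivPow k fun s => f s * g s := by
  obtain ⟨c, hc⟩ := hf
  obtain ⟨d, hd⟩ := hg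
  refine mono ⟨c * d, (hc.mul hd).congr fun s => ?_⟩ hk
  simp only [smul_eq_mul, pow_add, mul_inv]
  ring

lemma const_mul (c : ℝ) (hf : HasLimitDivPow n f) : HasLimitDivPow n fun s => c * f s :=
  hf.clm_apply (c • ContinuousLinearMap.id ℝ ℝ)

lemma inv_smul (hF : HasLimitDivPow (n + 1) F) : HasLimitDivPow n fun s => s⁻¹ • F s := by
  obtain ⟨c, hc⟩ := hF
  refine ⟨c, hc.congr fun s => ?_⟩
  rw [smul_smul, pow_succ, mul_inv]

lemma tendsto_zero (hF : HasLimitDivPow (n + 1) F) : Tendsto F (𝓝[≠] 0) (𝓝 0) := by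
  obtain ⟨c, hc⟩ := hF.mono (Nat.le_add_left 1 n)
  have hid : Tendsto (fun s : ℝ => s) (𝓝[≠] 0) (𝓝 0) := tendsto_id.mono_left nhdsWithin_le_nhds
  rw [← zero_smul ℝ c]
  refine (hid.smul hc).congr' ?_
  filter_upwards [self_mem_nhdsWithin] with s hs
  rw [pow_one, smul_inv_smul₀ hs]

lemma inv_sub_one (hf : HasLimitDivPow (n + 1) fun s => f s - 1) :
    HasLimitDivPow (n + 1) fun s => (f s)⁻¹ - 1 := by
  have hlim : Tendsto f (𝓝[≠] 0) (𝓝 1) := by simpa using hf.tendsto_zero.add_const 1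
  obtain ⟨c, hc⟩ := hf.neg
  refine ⟨_, (hc.mul (hlim.inv₀ one_ne_zero)).congr' ?_⟩
  filter_upwards [hlim.eventually_ne one_ne_zero] with s hs
  simp only [smul_eq_mul]
  field_simp
  ring

end HasLimitDivPow

lemma hasLimitDivPow_pow (n : ℕ) : HasLimitDivPow n fun s => s ^ n := by
  refine ⟨1, tendsto_const_nhds.congr' ?_⟩
  filter_upwards [self_mem_nhdsWithin] with s hs
  rw [smul_eq_mul, inv_mul_cancel₀ (pow_ne_zero n hs)]

lemma hasLimitDivPow_taylor {n : ℕ} {F : ℝ → E} (hF : ContDiff ℝ n F) (t : ℝ) :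
    HasLimitDivPow n fun s => F (t + s)
      - ∑ k ∈ Finset.range n, ((k.factorial : ℝ)⁻¹ * s ^ k) • iteratedDeriv k F t := by
  have hlim : Tendsto (fun s : ℝ => t + s) (𝓝[≠] 0) (𝓝[Set.univ] t) := by
    simpa using (continuous_const_add t).tendsto' 0 t (add_zero t) |>.mono_left nhdsWithin_le_nhds
  have h := (taylor_tendsto convex_univ (Set.mem_univ t) hF.contDiffOn).comp hlim
  refine ⟨_, (h.add_const (((n.factorial : ℝ)⁻¹) • iteratedDeriv n F t)).congr' ?_⟩
  filter_upwards [self_mem_nhdsWithin] with s hs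
  simp only [Function.comp_apply, taylor_within_apply, add_sub_cancel_left,
    iteratedDerivWithin_univ, Finset.sum_range_succ]
  rw [← sub_sub, smul_sub (_⁻¹) (_ - _), smul_smul, mul_comm (_⁻¹) (s ^ n),
    inv_mul_cancel_left₀ (pow_ne_zero n hs), sub_add_cancel]

end HasLimitDivPow

lemma hasLimitDivPow_linear_add_sq (a b : ℝ) : HasLimitDivPow 1 fun s => a * s + b * s ^ 2 :=
  (((hasLimitDivPow_pow 1).const_mul a).add ((hasLimitDivPow_pow 2).const_mul b).mono).congr
    fun s _ => by rw [pow_one]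

/-- `f s = exp (i (a s + b s²))` up to `O(s²)` in the real part and `O(s³)` in the imaginary part,
the orders to which the factors of the kernel are needed. The pair `(a, b)` of phase coefficients
is additive under products. -/
structure HasPhase (f : ℝ → ℂ) (a b : ℝ) : Prop where
  re : HasLimitDivPow 2 fun s => (f s).re - 1
  im_sub : HasLimitDivPow 3 fun s => (f s).im - (a * s + b * s ^ 2)

namespace HasPhase

variable {f g : ℝ → ℂ} {a b a' b' : ℝ}

lemma im (hf : HasPhase f a b) : HasLimitDivPow 1 fun s => (f s).im :=
  (hf.im_sub.mono.add (hasLimitDivPow_linear_add_sq a b)).congr fun s _ => sub_add_cancel _ _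

lemma mul_re (hf : HasPhase f a b) {u : ℝ → ℝ}
    (hu : HasLimitDivPow 3 fun s => u s - (a' * s + b' * s ^ 2)) :
    HasLimitDivPow 3 fun s => u s * (f s).re - (a' * s + b' * s ^ 2) :=
  (((hu.mul hf.re).add hu).add ((hasLimitDivPow_linear_add_sq a' b').mul hf.re)).congr
    fun s _ => by ring

lemma mul (hf : HasPhase f a b) (hg : HasPhase g a' b') :
    HasPhase (fun s => f s * g s) (a + a') (b + b') where
  re := by
    refine ((((hf.re.mul hg.re).add hf.re).add hg.re).sub
      (hf.im.mul hg.im)).congr fun s _ => ?_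
    rw [Complex.mul_re]
    ring
  im_sub := by
    refine ((((hf.re.mul hg.im).add (hf.im.mul hg.re)).add hf.im_sub).add hg.im_sub).congr
      fun s _ => ?_
    rw [Complex.mul_im]
    ring

lemma star (hf : HasPhase f a b) : HasPhase (fun s => conj (f s)) (-a) (-b) where
  re := by simpa only [Complex.conj_re] using hf.re
  im_sub := hf.im_sub.neg.congr fun s _ => by rw [Complex.conj_im]; ring

lemma inv (hf : HasPhase f a b) : HasPhase (fun s => (f s)⁻¹) (-a) (-b) := by
  have hnormSq : HasLimitDivPow 2 fun s => Complex.normSq (f s) - 1 := by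
    refine ((hf.re.mul hf.re).add
      ((hf.re.const_mul 2).add (hf.im.mul hf.im))).congr fun s _ => ?_
    rw [Complex.normSq_apply]
    ring
  have hinv := hnormSq.inv_sub_one
  constructor
  · refine ((hf.re.mul hinv).add (hf.re.add hinv)).congr fun s _ => ?_
    rw [Complex.inv_re]
    ring
  · refine ((hf.im.mul hinv).neg.sub hf.im_sub).congr fun s _ => ?_
    rw [Complex.inv_im]
    ring

lemma pow (hf : HasPhase f a b) (n : ℕ) : HasPhase (fun s => f s ^ n) (n * a) (n * b) := by
  induction n with
  | zero =>
    have hzero (m : ℕ) : HasLimitDivPow m fun _ => (0 : ℝ) := ⟨0, by simp⟩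
    constructor <;> simpa using hzero _
  | succ n ih => simpa only [pow_succ, Nat.cast_succ, add_mul, one_mul] using ih.mul hf

lemma tendsto_re (hf : HasPhase f a b) : Tendsto (fun s => (f s).re) (𝓝[≠] 0) (𝓝 1) := by
  simpa using hf.re.tendsto_zero.add_const 1

end HasPhase

lemma hasPhase_of_taylor {f : ℝ → ℂ} {a b c : ℝ}
    (hf : HasLimitDivPow 3 fun s : ℝ =>
      f s - (1 + Complex.I * a * s + (c + Complex.I * b) * s ^ 2)) :
    HasPhase f a b where
  re := by
    refine ((hf.clm_apply Complex.reCLM).mono.add ((hasLimitDivPow_pow 2).const_mul c)).congr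
      fun s _ => ?_
    simp only [← Complex.ofReal_pow, Complex.reCLM_apply, Complex.sub_re, Complex.add_re,
      Complex.add_im, Complex.mul_re, Complex.mul_im, Complex.one_re, Complex.I_re, Complex.I_im,
      Complex.ofReal_re, Complex.ofReal_im]
    ring
  im_sub := (hf.clm_apply Complex.imCLM).congr fun s _ => by simp [← Complex.ofReal_pow]

lemma hasLimitDivPow_reducedKernel_im {e q : ℝ → ℂ} {k k₁ : ℝ} (he : HasPhase e k (k₁ / 2))
    (hq : HasPhase q (k / 2) (k₁ / 6)) (ν : ℝ) :
    HasLimitDivPow 3 fun s => 6 * (1 - ν) ^ 2 * (e s ^ 3 * conj (q s) * (q s)⁻¹ ^ 4).im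
      + 2 * (1 - ν) * (2 * (1 + ν) * (e s ^ 3 * (q s)⁻¹ ^ 3).im
        - (5 - ν) * (e s * (q s)⁻¹ ^ 3).im)
      - ((1 - ν) * (14 + 2 * ν) * k * s + 8 * (1 - ν) * k₁ * s ^ 2) := by
  have h₁ := (((he.pow 3).mul hq.star).mul (hq.inv.pow 4)).im_sub
  have h₂ := ((he.pow 3).mul (hq.inv.pow 3)).im_sub
  have h₃ := (he.mul (hq.inv.pow 3)).im_sub
  refine ((h₁.const_mul (6 * (1 - ν) ^ 2)).add (((h₂.const_mul (2 * (1 + ν))).sub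
    (h₃.const_mul (5 - ν))).const_mul (2 * (1 - ν)))).congr fun s _ => ?_
  push_cast
  ring

lemma hasLimitDivPow_reducedKernel {e q : ℝ → ℂ} {κ κ' : ℝ → ℝ} {k k₁ ν α₂ α₃ : ℝ}
    (he : HasPhase e k (k₁ / 2)) (hq : HasPhase q (k / 2) (k₁ / 6))
    (hκ : HasLimitDivPow 2 fun s => κ s - (k + k₁ * s))
    (hκ' : HasLimitDivPow 1 fun s => κ' s - k₁)
    (hα₂ : (3 - ν) * α₂ = (ν - 1) * (7 + ν)) (hα₃ : (1 + ν) * α₃ = (1 - ν) * (3 + ν)) :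
    HasLimitDivPow 3 fun s => reducedKernel ν α₂ α₃ s (κ s) (κ' s) (e s) (q s) := by
  have hκs : HasLimitDivPow 3 fun s => κ s * s - (k * s + k₁ * s ^ 2) :=
    (hκ.mul (hasLimitDivPow_pow 1)).congr fun s _ => by ring
  have hκs₂ : HasLimitDivPow 3 fun s => κ' s * s ^ 2 - (0 * s + k₁ * s ^ 2) :=
    (hκ'.mul (hasLimitDivPow_pow 2)).congr fun s _ => by ring
  have h₁ := (((he.pow 2).mul hq.star).mul (hq.inv.pow 3)).mul_re hκs
  have h₂ := (hq.inv.pow 2).mul_re hκs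
  have h₃ := ((he.pow 2).mul (hq.inv.pow 2)).mul_re hκs
  have h₄ := ((he.mul hq.star).mul (hq.inv.pow 2)).mul_re hκs₂
  have h₅ := (he.star.mul hq.inv).mul_re hκs₂
  have h₆ := (he.mul hq.inv).mul_re hκs₂
  refine (((hasLimitDivPow_reducedKernel_im he hq ν).add
    ((((h₁.add h₂).const_mul (2 * (1 - ν))).add (h₃.const_mul (2 * (1 + ν)))).const_mul α₂)).add
    ((((h₄.sub h₅).const_mul (1 - ν)).add (h₆.const_mul (2 * (1 + ν)))).const_mul α₃)).congr
      fun s _ => ?_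
  rw [reducedKernel]
  linear_combination (-2 * (k * s + k₁ * s ^ 2)) * hα₂ - 2 * k₁ * s ^ 2 * hα₃

section Curve

variable {γ : ℝ → ℝ × ℝ}

lemma norm_toComplex_tang (harc : ∀ s, dot2 (deriv γ s) (deriv γ s) = 1) (s : ℝ) :
    ‖toComplex (tang γ s)‖ = 1 := by
  rw [← sq_eq_sq₀ (norm_nonneg _) zero_le_one, ← dot2_self, one_pow]
  exact harc s

lemma contDiff_tang {n : ℕ} (hγ : ContDiff ℝ (n + 1) γ) : ContDiff ℝ n (tang γ) :=
  (contDiff_succ_iff_deriv.mp hγ).2.2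

lemma contDiff_curv {n : ℕ} (hγ : ContDiff ℝ (n + 2) γ) : ContDiff ℝ n (curv γ) := by
  have htang : ContDiff ℝ (n + 1) (deriv γ) := contDiff_tang (n := n + 1) hγ
  have htang' : ContDiff ℝ n (deriv γ) := htang.of_le (by simp)
  have hacc : ContDiff ℝ n (deriv (deriv γ)) := contDiff_tang htang
  exact ((hacc.fst.mul htang'.snd).add (hacc.snd.mul htang'.fst.neg)).neg

lemma hasDerivAt_toComplex_tang (hγ : ContDiff ℝ 2 γ) (harc : ∀ s, ‖toComplex (tang γ s)‖ = 1)
    (s : ℝ) :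
    HasDerivAt (fun r => toComplex (tang γ r)) (Complex.I * curv γ s * toComplex (tang γ s)) s := by
  have htang : HasDerivAt (tang γ) (deriv (deriv γ) s) s :=
    ((contDiff_tang (n := 1) hγ).differentiable one_ne_zero s).hasDerivAt
  have h : HasDerivAt (fun r => toComplex (tang γ r)) (toComplex (deriv (deriv γ) s)) s :=
    toComplex.hasFDerivAt.comp_hasDerivAt s htang
  have hunit : dot2 (tang γ s) (tang γ s) = 1 := by rw [dot2_self, harc, one_pow]
  have hperp : inner ℝ (toComplex (tang γ s)) (toComplex (deriv (deriv γ) s)) = 0 := by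
    have hsq : (fun r => ‖toComplex (tang γ r)‖ ^ 2) = fun _ => (1 : ℝ) := by simp [harc]
    have h2 := h.norm_sq
    rw [hsq] at h2
    simpa using h2.unique (hasDerivAt_const s 1)
  have hcurv : curv γ s = (deriv (deriv γ) s).2 * (tang γ s).1
      - (deriv (deriv γ) s).1 * (tang γ s).2 := by
    simp only [curv, nor, dot2, tang]
    ring
  simp only [Complex.inner, Complex.mul_re, Complex.conj_re, Complex.conj_im, toComplex_re,
    toComplex_im, dot2] at hunit hperp
  refine h.congr_deriv (Complex.ext ?_ ?_)
  · simp only [Complex.mul_re, Complex.mul_im, Complex.I_re, Complex.I_im, Complex.ofReal_re,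
      Complex.ofReal_im, toComplex_re, toComplex_im, hcurv]
    linear_combination (tang γ s).1 * hperp - (deriv (deriv γ) s).1 * hunit
  · simp only [Complex.mul_re, Complex.mul_im, Complex.I_re, Complex.I_im, Complex.ofReal_re,
      Complex.ofReal_im, toComplex_re, toComplex_im, hcurv]
    linear_combination (tang γ s).2 * hperp - (deriv (deriv γ) s).2 * hunit

lemma iteratedDeriv_one_toComplex_tang (hγ : ContDiff ℝ 2 γ)
    (harc : ∀ s, ‖toComplex (tang γ s)‖ = 1) :
    iteratedDeriv 1 (fun r => toComplex (tang γ r)) =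
      fun s => Complex.I * curv γ s * toComplex (tang γ s) := by
  rw [iteratedDeriv_one]
  exact funext fun s => (hasDerivAt_toComplex_tang hγ harc s).deriv

lemma iteratedDeriv_two_toComplex_tang (hγ : ContDiff ℝ 3 γ)
    (harc : ∀ s, ‖toComplex (tang γ s)‖ = 1) (s : ℝ) :
    iteratedDeriv 2 (fun r => toComplex (tang γ r)) s =
      (Complex.I * deriv (curv γ) s - curv γ s ^ 2) * toComplex (tang γ s) := by
  have hγ2 : ContDiff ℝ 2 γ := hγ.of_le (by norm_num)
  have hcurv : HasDerivAt (curv γ) (deriv (curv γ) s) s :=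
    ((contDiff_curv (n := 1) (by convert hγ using 1; norm_num)).differentiable one_ne_zero
      s).hasDerivAt
  rw [iteratedDeriv_succ, iteratedDeriv_one_toComplex_tang hγ2 harc]
  refine (((hcurv.ofReal_comp.const_mul Complex.I).mul
    (hasDerivAt_toComplex_tang hγ2 harc s)).deriv).trans ?_
  linear_combination curv γ s ^ 2 * toComplex (tang γ s) * Complex.I_sq

lemma iteratedDeriv_succ_toComplex_comp (hγ : Differentiable ℝ γ) (n : ℕ) :
    iteratedDeriv (n + 1) (fun r => toComplex (γ r)) =
      iteratedDeriv n fun r => toComplex (tang γ r) := by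
  rw [iteratedDeriv_succ']
  congr 1
  exact funext fun s => (toComplex.hasFDerivAt.comp_hasDerivAt s (hγ s).hasDerivAt).deriv

lemma hasPhase_turning (hγ : ContDiff ℝ 4 γ) (harc : ∀ s, ‖toComplex (tang γ s)‖ = 1) (t : ℝ) :
    HasPhase (turning γ t) (curv γ t) (deriv (curv γ) t / 2) := by
  have h := (hasLimitDivPow_taylor (n := 3)
    (toComplex.contDiff.comp (contDiff_tang (n := 3) hγ)) t).clm_apply
    (ContinuousLinearMap.mul ℝ ℂ (conj (toComplex (tang γ t))))
  refine hasPhase_of_taylor (c := -curv γ t ^ 2 / 2) (h.congr fun s _ => ?_)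
  simp only [Finset.sum_range_succ, Function.comp_def,
    iteratedDeriv_one_toComplex_tang (hγ.of_le (by norm_num)) harc,
    iteratedDeriv_two_toComplex_tang (hγ.of_le (by norm_num)) harc]
  simp only [turning, ContinuousLinearMap.mul_apply', Complex.real_smul, Nat.factorial,
    iteratedDeriv_zero, Finset.sum_range_zero]
  push_cast
  linear_combination (-(1 + Complex.I * curv γ t * s
    + (-curv γ t ^ 2 / 2 + Complex.I * ((deriv (curv γ) t : ℝ) / 2)) * s ^ 2))
    * toComplex_tang_mul_conj harc t

lemma hasLimitDivPow_curv (hγ : ContDiff ℝ 4 γ) (t : ℝ) :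
    HasLimitDivPow 2 fun s => curv γ (t + s) - (curv γ t + deriv (curv γ) t * s) := by
  refine (hasLimitDivPow_taylor (n := 2) (contDiff_curv (n := 2) hγ) t).congr fun s _ => ?_
  simp [Finset.sum_range_succ, iteratedDeriv_one, mul_comm]

lemma hasLimitDivPow_deriv_curv (hγ : ContDiff ℝ 4 γ) (t : ℝ) :
    HasLimitDivPow 1 fun s => deriv (curv γ) (t + s) - deriv (curv γ) t := by
  have hcurv : ContDiff ℝ 1 (deriv (curv γ)) :=
    (contDiff_succ_iff_deriv (n := 1).mp (contDiff_curv (n := 2) hγ)).2.2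
  exact (hasLimitDivPow_taylor (n := 1) hcurv t).congr fun s _ => by simp

lemma hasPhase_chord (hγ : ContDiff ℝ 4 γ) (harc : ∀ s, ‖toComplex (tang γ s)‖ = 1) (t : ℝ) :
    HasPhase (chord γ t) (curv γ t / 2) (deriv (curv γ) t / 6) := by
  have h := ((hasLimitDivPow_taylor (n := 4) (toComplex.contDiff.comp hγ) t).clm_apply
    (ContinuousLinearMap.mul ℝ ℂ (conj (toComplex (tang γ t))))).inv_smul
  refine hasPhase_of_taylor (c := -curv γ t ^ 2 / 6) (h.congr fun s hs => ?_)
  simp only [Finset.sum_range_succ, Function.comp_def,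
    iteratedDeriv_succ_toComplex_comp (hγ.differentiable (by norm_num)),
    iteratedDeriv_one_toComplex_tang (hγ.of_le (by norm_num)) harc,
    iteratedDeriv_two_toComplex_tang (hγ.of_le (by norm_num)) harc]
  have hs' : (s : ℂ) * (s : ℂ)⁻¹ = 1 := mul_inv_cancel₀ (by exact_mod_cast hs)
  simp only [chord, ContinuousLinearMap.mul_apply', Complex.real_smul, Nat.factorial,
    iteratedDeriv_zero, Finset.sum_range_zero, map_sub]
  push_cast
  linear_combination (-(1 + Complex.I * (curv γ t / 2) * s
    + (-curv γ t ^ 2 / 6 + Complex.I * ((deriv (curv γ) t : ℝ) / 6)) * s ^ 2))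
    * (toComplex_tang_mul_conj harc t
      + toComplex (tang γ t) * conj (toComplex (tang γ t)) * hs')

lemma eventually_ne_of_hasPhase_chord {a b t : ℝ} (h : HasPhase (chord γ t) a b) :
    ∀ᶠ s in 𝓝[≠] 0, γ t ≠ γ (t + s) := by
  filter_upwards [h.tendsto_re.eventually_ne one_ne_zero] with s hs heq
  exact hs (by simp [chord, ← heq])

end Curve

theorem stmt5_general (γ : ℝ → ℝ × ℝ) (hγ : ContDiff ℝ 4 γ)
    (harc : ∀ s, dot2 (deriv γ s) (deriv γ s) = 1)
    (ν : ℝ) (hν3 : ν ≠ 3) (hν1 : ν ≠ -1)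
    (α₁ α₂ α₃ : ℝ) (hα₁ : α₁ = 2 - ν)
    (hα₂ : α₂ = (ν - 1) * (7 + ν) / (3 - ν))
    (hα₃ : α₃ = (1 - ν) * (3 + ν) / (1 + ν))
    (t : ℝ) :
    ∃ c : ℝ,
      Tendsto (fun s : ℝ => suppKer γ ν α₁ α₂ α₃ t (γ t) (t + s)) (𝓝[≠] (0 : ℝ))
        (𝓝 c) := by
  have hunit := norm_toComplex_tang harc
  have hchord := hasPhase_chord hγ hunit t
  have hα₂' : (3 - ν) * α₂ = (ν - 1) * (7 + ν) := by
    rw [hα₂, mul_div_cancel₀ _ (sub_ne_zero.mpr hν3.symm)]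
  have hα₃' : (1 + ν) * α₃ = (1 - ν) * (3 + ν) := by
    rw [hα₃, mul_div_cancel₀ _ fun h => hν1 (by linarith)]
  obtain ⟨c, hc⟩ := hasLimitDivPow_reducedKernel (hasPhase_turning hγ hunit t) hchord
    (hasLimitDivPow_curv hγ t) (hasLimitDivPow_deriv_curv hγ t) hα₂' hα₃'
  refine ⟨1 / (8 * π) * c, (hc.const_mul _).congr' ?_⟩
  filter_upwards [self_mem_nhdsWithin, eventually_ne_of_hasPhase_chord hchord] with s hs hne
  rw [hα₁, suppKer_eq_reducedKernel hunit ν α₂ α₃ t hs hne, smul_eq_mul]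

theorem stmt5 (L : ℝ) (hL : 0 < L) (γ : ℝ → ℝ × ℝ)
    (hγ : ContDiff ℝ (⊤ : ℕ∞) γ)
    (hper : ∀ s, γ (s + L) = γ s)
    (hinj : Set.InjOn γ (Set.Ico 0 L))
    (harc : ∀ s, dot2 (deriv γ s) (deriv γ s) = 1)
    (ν : ℝ) (hν3 : ν ≠ 3) (hν1 : ν ≠ -1)
    (α₁ α₂ α₃ : ℝ) (hα₁ : α₁ = 2 - ν)
    (hα₂ : α₂ = (ν - 1) * (7 + ν) / (3 - ν))
    (hα₃ : α₃ = (1 - ν) * (3 + ν) / (1 + ν))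
    (t : ℝ) :
    ∃ c : ℝ,
      Tendsto (fun s : ℝ => suppKer γ ν α₁ α₂ α₃ t (γ t) (t + s)) (𝓝[≠] (0 : ℝ))
        (𝓝 c) := by
  exact stmt5_general γ (contDiff_infty.mp hγ 4) harc ν hν3 hν1 α₁ α₂ α₃ hα₁ hα₂ hα₃ t
end
end

section
/- (Flattening change of variables near the boundary.) Fix t ∈ ℝ. There exist h₀ > 0, u₀ > 0 and an infinitely differentiable function v : (−u₀, u₀) × (−h₀, h₀) → ℝ such that for all |h| < h₀ one has 1 + hκ(t) > 0 and v(0, h) = (1 + hκ(t))^{−1/2}, and for all |u| < u₀ and |h| < h₀, ‖γ(t) + h·n(t) − γ(t + u·v(u,h))‖² = h² + u². -/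
open Real Filter Topology MeasureTheory

noncomputable section

/- Subtract from `γ(t + s)` its second-order Taylor expansion: `γ(t + s) = γ(t) + s τ + s² R(s)`,
with `R` smooth and `R(0) = γ″(t) / 2`. As `τ ⊥ n` and both are unit vectors,
`‖γ(t) + h n − γ(t + s)‖² = h² + s² G(s, h)` where `G(s, h) = ‖τ + s R(s)‖² − 2 h n · R(s)` and
`G(0, h) = 1 + h κ(t)`. Putting `s = u v` and cancelling `u²`, it remains to solve
`v² G(u v, h) = 1` with `v > 0` near `(u, h) = (0, 0)`. This is done by the implicit function
theorem, since the `v`-derivative of the left-hand side at `u = 0` is `2 v G(0, h) ≠ 0`. -/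

section ParametricIntegral

variable {E : Type*} [NormedAddCommGroup E] [NormedSpace ℝ E] {F : ℝ → ℝ → E}

theorem hasDerivAt_left_of_contDiff_uncurry (hF : ContDiff ℝ 1 (Function.uncurry F)) (x s : ℝ) :
    HasDerivAt (F · s) (fderiv ℝ (Function.uncurry F) (x, s) (1, 0)) x :=
  (hF.differentiable one_ne_zero (x, s)).hasFDerivAt.comp_hasDerivAt (f := fun y ↦ (y, s)) x
    ((hasDerivAt_id x).prodMk (hasDerivAt_const x s))

theorem contDiff_uncurry_deriv_left {n : WithTop ℕ∞}
    (hF : ContDiff ℝ (n + 1) (Function.uncurry F)) :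
    ContDiff ℝ n (Function.uncurry fun x s ↦ deriv (F · s) x) := by
  have hderiv : (Function.uncurry fun x s ↦ deriv (F · s) x) =
      fun p ↦ fderiv ℝ (Function.uncurry F) p (1, 0) :=
    funext fun p ↦ (hasDerivAt_left_of_contDiff_uncurry (hF.of_le le_add_self) p.1 p.2).deriv
  rw [hderiv]
  exact (hF.fderiv_right le_rfl).clm_apply contDiff_const

theorem hasDerivAt_intervalIntegral_of_contDiff (hF : ContDiff ℝ 1 (Function.uncurry F))
    (a b x : ℝ) :
    HasDerivAt (fun y ↦ ∫ s in a..b, F y s) (∫ s in a..b, deriv (F · s) x) x := by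
  have hF_cont (y : ℝ) : Continuous (F y) := hF.continuous.uncurry_left y
  have hF'_cont : Continuous (Function.uncurry fun y s ↦ deriv (F · s) y) :=
    (contDiff_uncurry_deriv_left (n := 0) (by simpa using hF)).continuous
  have hcompact : IsCompact (Metric.closedBall x 1 ×ˢ Set.uIcc a b) :=
    (isCompact_closedBall x 1).prod isCompact_uIcc
  obtain ⟨C, hC⟩ := hcompact.exists_bound_of_continuousOn hF'_cont.continuousOn
  refine (intervalIntegral.hasDerivAt_integral_of_dominated_loc_of_deriv_le (bound := fun _ ↦ C)
    (Metric.closedBall_mem_nhds x one_pos) (.of_forall fun y ↦ (hF_cont y).aestronglyMeasurable)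
    ((hF_cont x).intervalIntegrable a b) (hF'_cont.uncurry_left x).aestronglyMeasurable
    (.of_forall fun s hs y hy ↦ hC (y, s) ⟨hy, Set.uIoc_subset_uIcc hs⟩)
    intervalIntegrable_const (.of_forall fun s _ y _ ↦ ?_)).2
  exact (hasDerivAt_left_of_contDiff_uncurry hF y s).differentiableAt.hasDerivAt

theorem contDiff_intervalIntegral {n : ℕ∞} (hF : ContDiff ℝ n (Function.uncurry F)) (a b : ℝ) :
    ContDiff ℝ n fun x ↦ ∫ s in a..b, F x s := by
  refine contDiff_iff_forall_nat_le.2 fun m hm ↦ ?_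
  replace hF : ContDiff ℝ m (Function.uncurry F) := hF.of_le (mod_cast hm)
  clear hm
  induction m generalizing F with
  | zero =>
    exact contDiff_zero.2 <|
      intervalIntegral.continuous_parametric_intervalIntegral_of_continuous' hF.continuous a b
  | succ m ih =>
    have hderiv := hasDerivAt_intervalIntegral_of_contDiff (hF.of_le (mod_cast le_add_self)) a b
    push_cast at hF ⊢
    refine contDiff_succ_iff_deriv.2 ⟨fun x ↦ (hderiv x).differentiableAt, by simp, ?_⟩
    rw [funext fun x ↦ (hderiv x).deriv]
    exact ih (contDiff_uncurry_deriv_left hF)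

end ParametricIntegral

section Taylor

variable {E : Type*} [NormedAddCommGroup E] [NormedSpace ℝ E] {f : ℝ → E}

theorem dslope_eq_intervalIntegral [CompleteSpace E] (hf : ContDiff ℝ 1 f) (a x : ℝ) :
    dslope f a x = ∫ s in (0 : ℝ)..1, deriv f (a + s * (x - a)) := by
  rcases eq_or_ne x a with rfl | hx
  · simp
  have hf' : Continuous (deriv f) := hf.continuous_deriv le_rfl
  have hmean := intervalIntegral.integral_unitInterval_deriv_eq_sub (f := f) (z₀ := a) (z₁ := x - a)
    (hf'.comp (by fun_prop)).continuousOn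
    fun s _ ↦ (hf.differentiable one_ne_zero (a + s • (x - a))).hasDerivAt
  refine smul_right_injective E (sub_ne_zero.2 hx) ?_
  simpa using hmean.symm

theorem contDiff_dslope [CompleteSpace E] {n : ℕ∞} (hf : ContDiff ℝ (n + 1) f) (a : ℝ) :
    ContDiff ℝ n (dslope f a) := by
  rw [funext (dslope_eq_intervalIntegral (hf.of_le le_add_self) a)]
  have : ContDiff ℝ n (deriv f) := (contDiff_succ_iff_deriv.1 hf).2.2
  exact contDiff_intervalIntegral (by unfold Function.uncurry; fun_prop) 0 1

theorem deriv_dslope_self [CompleteSpace E] (hf : ContDiff ℝ 2 f) (a : ℝ) :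
    deriv (dslope f a) a = (1 / 2 : ℝ) • deriv (deriv f) a := by
  have hf' : ContDiff ℝ 1 (deriv f) := (contDiff_succ_iff_deriv.1 hf).2.2
  have hF : ContDiff ℝ 1 (Function.uncurry fun x s ↦ deriv f (a + s * (x - a))) := by
    unfold Function.uncurry
    fun_prop
  have hchain (s : ℝ) : deriv (fun x ↦ deriv f (a + s * (x - a))) a = s • deriv (deriv f) a := by
    have hline : HasDerivAt (fun x ↦ a + s * (x - a)) s a := by
      simpa using (((hasDerivAt_id a).sub_const a).const_mul s).const_add a
    have hderiv : HasDerivAt (deriv f) (deriv (deriv f) a) (a + s * (a - a)) := by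
      simpa using (hf'.differentiable one_ne_zero a).hasDerivAt
    exact (hderiv.scomp a hline).deriv
  rw [funext (dslope_eq_intervalIntegral (hf.of_le one_le_two) a),
    (hasDerivAt_intervalIntegral_of_contDiff hF 0 1 a).deriv]
  simp [hchain, intervalIntegral.integral_smul_const]

/-- The remainder `R` of the second-order Taylor expansion `f (t + s) = f t + s f′(t) + s² R(s)`.
Written with iterated `dslope`, it also has the right value at `s = 0`, where dividing by `s ^ 2`
would return `0`. -/
def taylorRemainder (f : ℝ → E) (t s : ℝ) : E := dslope (dslope f t) t (t + s)

theorem apply_add_eq_taylorRemainder (f : ℝ → E) (t s : ℝ) :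
    f (t + s) = f t + s • deriv f t + s ^ 2 • taylorRemainder f t s := by
  have hfirst : s • dslope f t (t + s) = f (t + s) - f t := by
    simpa using sub_smul_dslope f t (t + s)
  have hsecond : s • taylorRemainder f t s = dslope f t (t + s) - deriv f t := by
    simpa [taylorRemainder] using sub_smul_dslope (dslope f t) t (t + s)
  rw [pow_two, mul_smul, hsecond, smul_sub, hfirst]
  abel

theorem taylorRemainder_zero [CompleteSpace E] (hf : ContDiff ℝ 2 f) (t : ℝ) :
    taylorRemainder f t 0 = (1 / 2 : ℝ) • deriv (deriv f) t := by
  simp [taylorRemainder, deriv_dslope_self hf]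

theorem contDiff_taylorRemainder [CompleteSpace E] {n : ℕ∞} (hf : ContDiff ℝ (n + 2) f) (t : ℝ) :
    ContDiff ℝ n (taylorRemainder f t) := by
  have hslope : ContDiff ℝ (n + 1 : ℕ∞) (dslope f t) :=
    contDiff_dslope (by push_cast; rwa [add_assoc, one_add_one_eq_two]) t
  exact (contDiff_dslope (mod_cast hslope) t).comp (contDiff_const.add contDiff_id)

end Taylor

section ImplicitFunction

variable {𝕜 : Type*} [RCLike 𝕜]
  {E₁ : Type*} [NormedAddCommGroup E₁] [NormedSpace 𝕜 E₁]
  {E₂ : Type*} [NormedAddCommGroup E₂] [NormedSpace 𝕜 E₂] [CompleteSpace E₂]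
  {F : Type*} [NormedAddCommGroup F] [NormedSpace 𝕜 F]
  {f : E₁ × E₂ → F} {u : E₁ × E₂} {n : WithTop ℕ∞}

theorem eventually_isInvertible_fderiv_comp_inr (hf : ContDiffAt 𝕜 n f u) (hn : n ≠ 0)
    (hinv : (fderiv 𝕜 f u ∘L .inr 𝕜 E₁ E₂).IsInvertible) :
    ∀ᶠ w in 𝓝 u, (fderiv 𝕜 f w ∘L .inr 𝕜 E₁ E₂).IsInvertible := by
  have hcont : ContinuousAt (fun w ↦ fderiv 𝕜 f w ∘L .inr 𝕜 E₁ E₂) u :=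
    (hf.continuousAt_fderiv hn).clm_comp continuousAt_const
  exact hcont.eventually (ContinuousLinearEquiv.isOpen.mem_nhds hinv)

/- `ContDiffAt 𝕜 ∞` at a point does not give `ContDiffAt 𝕜 ∞` nearby, so smoothness of the implicit
function `ψ` at a nearby `x` has to come from the implicit function based at `(x, ψ x)`, which
coincides with `ψ` by local uniqueness. -/
theorem eventually_contDiffAt_implicitFunction [CompleteSpace E₁] [CompleteSpace F]
    (hf : ∀ᶠ w in 𝓝 u, ContDiffAt 𝕜 n f w) (hn : n ≠ 0)
    (hinv : (fderiv 𝕜 f u ∘L .inr 𝕜 E₁ E₂).IsInvertible) :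
    ∀ᶠ x in 𝓝 u.1, ContDiffAt 𝕜 n (hf.self_of_nhds.implicitFunction hn hinv) x := by
  have hu := hf.self_of_nhds
  set ψ := hu.implicitFunction hn hinv
  have hgraph : Tendsto (fun x ↦ (x, ψ x)) (𝓝 u.1) (𝓝 u) := by
    have := continuousAt_id.prodMk (hu.contDiffAt_implicitFunction hn hinv).continuousAt
    simpa only [ContinuousAt, id, hu.implicitFunction_apply_self hn hinv] using this
  filter_upwards [hu.eventually_apply_implicitFunction hn hinv,
    hgraph.eventually (hu.eventually_apply_eq_iff_implicitFunction hn hinv).eventually_nhds,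
    hgraph.eventually hf,
    hgraph.eventually (eventually_isInvertible_fderiv_comp_inr hu hn hinv)]
    with x hsolves hunique hsmooth hinv_x
  set g := hsmooth.implicitFunction hn hinv_x
  have hg : ContDiffAt 𝕜 n g x := hsmooth.contDiffAt_implicitFunction hn hinv_x
  have hgraph_g : Tendsto (fun y ↦ (y, g y)) (𝓝 x) (𝓝 (x, ψ x)) := by
    have := continuousAt_id.prodMk hg.continuousAt
    have hgx : g x = ψ x := hsmooth.implicitFunction_apply_self hn hinv_x
    simpa only [ContinuousAt, id, hgx] using this
  refine hg.congr_of_eventuallyEq ?_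
  filter_upwards [hsmooth.eventually_apply_implicitFunction hn hinv_x,
    hgraph_g.eventually hunique] with y hgy huniq_y
  exact huniq_y.1 (hgy.trans hsolves)

theorem isInvertible_of_isUnit_apply_one {R : Type*} [Semiring R] [TopologicalSpace R]
    [ContinuousMul R] {L : R →L[R] R} (hL : IsUnit (L 1)) : L.IsInvertible :=
  ⟨ContinuousLinearEquiv.unitsEquivAut R hL.unit, by ext; simp⟩

theorem exists_contDiffAt_pos_sq_mul_eq_one {H : Type*} [NormedAddCommGroup H] [NormedSpace ℝ H]
    [CompleteSpace H] {G : ℝ × H → ℝ} (hG : ContDiff ℝ n G) (hn : n ≠ 0) {p : H}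
    (hp : 0 < G (0, p)) :
    ∃ v : ℝ × H → ℝ, ∀ᶠ x in 𝓝 (0, p),
      ContDiffAt ℝ n v x ∧ 0 < v x ∧ v x ^ 2 * G (x.1 * v x, x.2) = 1 := by
  set c : ℝ := (√(G (0, p)))⁻¹ with hc
  have hc_pos : 0 < c := inv_pos.2 (sqrt_pos.2 hp)
  have hc_sq : c ^ 2 * G (0, p) = 1 := by
    rw [hc, inv_pow, sq_sqrt hp.le, inv_mul_cancel₀ hp.ne']
  set Φ : (ℝ × H) × ℝ → ℝ := fun w ↦ w.2 ^ 2 * G (w.1.1 * w.2, w.1.2) with hΦ_def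
  have hΦ : ContDiff ℝ n Φ := by fun_prop
  have hΦ_base : Φ ((0, p), c) = 1 := by simpa [hΦ_def] using hc_sq
  have hpartial : HasDerivAt (fun w ↦ Φ ((0, p), w)) (2 * c * G (0, p)) c := by
    simpa [hΦ_def] using (hasDerivAt_pow 2 c).mul_const (G (0, p))
  have hfderiv : fderiv ℝ Φ ((0, p), c) (0, 1) = 2 * c * G (0, p) :=
    ((hΦ.differentiable hn _).hasFDerivAt.comp_hasDerivAt c
      ((hasDerivAt_const c (0, p)).prodMk (hasDerivAt_id c))).unique hpartial
  have hinv : (fderiv ℝ Φ ((0, p), c) ∘L .inr ℝ (ℝ × H) ℝ).IsInvertible :=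
    isInvertible_of_isUnit_apply_one (by simpa [hfderiv] using ⟨hc_pos.ne', hp.ne'⟩)
  have hsmooth : ∀ᶠ w in 𝓝 ((0, p), c), ContDiffAt ℝ n Φ w := .of_forall fun _ ↦ hΦ.contDiffAt
  have hbase := hsmooth.self_of_nhds
  refine ⟨hbase.implicitFunction hn hinv, ?_⟩
  have hpos : ∀ᶠ x in 𝓝 (0, p), 0 < hbase.implicitFunction hn hinv x :=
    (hbase.contDiffAt_implicitFunction hn hinv).continuousAt.eventually
      (lt_mem_nhds (by rwa [hbase.implicitFunction_apply_self hn hinv]))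
  filter_upwards [eventually_contDiffAt_implicitFunction hsmooth hn hinv, hpos,
    hbase.eventually_apply_implicitFunction hn hinv] with x hx hx_pos hx_eq
  exact ⟨hx, hx_pos, hx_eq.trans hΦ_base⟩

end ImplicitFunction

section Curve

variable {γ : ℝ → ℝ × ℝ} {t : ℝ}

/-- The factor `G(s, h) = ‖τ + s R(s)‖² − 2 h n · R(s)`, where `R` is the Taylor remainder of `γ`
at `t`. It measures the squared distance from `γ t + h n` to `γ (t + s)`, which is
`h² + s² G(s, h)`. -/
def offsetFactor (γ : ℝ → ℝ × ℝ) (t : ℝ) (p : ℝ × ℝ) : ℝ :=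
  dot2 (tang γ t + p.1 • taylorRemainder γ t p.1) (tang γ t + p.1 • taylorRemainder γ t p.1) -
    2 * p.2 * dot2 (nor γ t) (taylorRemainder γ t p.1)

theorem dot2_add_smul_nor_sub_self (hτ : dot2 (tang γ t) (tang γ t) = 1) (s h : ℝ) :
    dot2 (γ t + h • nor γ t - γ (t + s)) (γ t + h • nor γ t - γ (t + s)) =
      h ^ 2 + s ^ 2 * offsetFactor γ t (s, h) := by
  rw [apply_add_eq_taylorRemainder γ t s]
  simp only [offsetFactor, dot2, nor, tang, Prod.fst_add, Prod.snd_add, Prod.fst_sub, Prod.snd_sub,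
    Prod.smul_fst, Prod.smul_snd, smul_eq_mul] at hτ ⊢
  linear_combination h ^ 2 * hτ

theorem offsetFactor_zero (hγ : ContDiff ℝ 2 γ) (hτ : dot2 (tang γ t) (tang γ t) = 1) (h : ℝ) :
    offsetFactor γ t (0, h) = 1 + h * curv γ t := by
  simp only [offsetFactor, taylorRemainder_zero hγ, zero_smul, add_zero, hτ]
  simp only [curv, dot2, Prod.smul_fst, Prod.smul_snd, smul_eq_mul]
  ring

theorem contDiff_offsetFactor {n : ℕ∞} (hγ : ContDiff ℝ (n + 2) γ) (t : ℝ) :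
    ContDiff ℝ n (offsetFactor γ t) := by
  have := contDiff_taylorRemainder hγ t
  unfold offsetFactor dot2
  fun_prop

theorem stmt13_general {n : ℕ∞} (hn : n ≠ 0) (hγ : ContDiff ℝ (n + 2) γ)
    (hτ : dot2 (tang γ t) (tang γ t) = 1) :
    ∃ h₀ > (0 : ℝ), ∃ u₀ > (0 : ℝ), ∃ v : ℝ × ℝ → ℝ,
      ContDiffOn ℝ n v (Set.Ioo (-u₀) u₀ ×ˢ Set.Ioo (-h₀) h₀) ∧
      (∀ h : ℝ, |h| < h₀ →
        0 < 1 + h * curv γ t ∧ v (0, h) = 1 / √(1 + h * curv γ t)) ∧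
      (∀ u h : ℝ, |u| < u₀ → |h| < h₀ →
        dot2 (γ t + h • nor γ t - γ (t + u * v (u, h)))
            (γ t + h • nor γ t - γ (t + u * v (u, h))) = h ^ 2 + u ^ 2) := by
  have hG_zero := offsetFactor_zero (hγ.of_le le_add_self) hτ
  obtain ⟨v, hv⟩ := exists_contDiffAt_pos_sq_mul_eq_one (contDiff_offsetFactor hγ t)
    (mod_cast hn) (p := 0) (by simp [hG_zero])
  obtain ⟨ε, hε, hball⟩ := Metric.eventually_nhds_iff.1 hv
  replace hball {u h : ℝ} (hu : |u| < ε) (hh : |h| < ε) := hball (y := (u, h))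
    (by simpa [Prod.dist_eq] using ⟨hu, hh⟩)
  refine ⟨ε, hε, ε, hε, v, ?_, fun h hh ↦ ?_, fun u h hu hh ↦ ?_⟩
  · rintro ⟨u, h⟩ ⟨hu, hh⟩
    exact (hball (abs_lt.2 hu) (abs_lt.2 hh)).1.contDiffWithinAt
  · obtain ⟨-, hv_pos, hv_eq⟩ := hball (abs_zero.trans_lt hε) hh
    rw [zero_mul, hG_zero] at hv_eq
    have hκ : 0 < 1 + h * curv γ t := pos_of_mul_pos_right (hv_eq ▸ one_pos) (sq_nonneg _)
    refine ⟨hκ, (eq_div_iff (sqrt_pos.2 hκ).ne').2 ?_⟩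
    rw [← sqrt_sq hv_pos.le, ← sqrt_mul (sq_nonneg _), hv_eq, sqrt_one]
  · obtain ⟨-, -, hv_eq⟩ := hball hu hh
    rw [dot2_add_smul_nor_sub_self hτ]
    linear_combination u ^ 2 * hv_eq

end Curve

theorem stmt13 (L : ℝ) (hL : 0 < L) (γ : ℝ → ℝ × ℝ)
    (hγ : ContDiff ℝ (⊤ : ℕ∞) γ)
    (hper : ∀ s, γ (s + L) = γ s)
    (hinj : Set.InjOn γ (Set.Ico 0 L))
    (harc : ∀ s, dot2 (deriv γ s) (deriv γ s) = 1)
    (t : ℝ) :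
    ∃ h₀ > (0 : ℝ), ∃ u₀ > (0 : ℝ), ∃ v : ℝ × ℝ → ℝ,
      ContDiffOn ℝ (⊤ : ℕ∞) v (Set.Ioo (-u₀) u₀ ×ˢ Set.Ioo (-h₀) h₀) ∧
      (∀ h : ℝ, |h| < h₀ →
        0 < 1 + h * curv γ t ∧ v (0, h) = 1 / Real.sqrt (1 + h * curv γ t)) ∧
      (∀ u h : ℝ, |u| < u₀ → |h| < h₀ →
        dot2 (γ t + h • nor γ t - γ (t + u * v (u, h)))
            (γ t + h • nor γ t - γ (t + u * v (u, h))) = h ^ 2 + u ^ 2) :=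
  stmt13_general (n := ⊤) (by simp) hγ (harc t)
end
end
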